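/- arXiv:2406.07311 — 2 statements merged into one kernel-verified Lean document; each statement's English description precedes it below -/
import Mathlib

section
/- Let n ≥ 4, let λ be a partition of n having p parts equal to 1, let 1 ≤ i₁ < i₂ < i₃ ≤ n, and let a₄ ∈ {1,…,n} \ {i₁,i₂,i₃}. Then each of the three sets {π ∈ C_λ : π(i₁)=i₁, π(i₂)=i₂, π(i₃)=a₄}, {π ∈ C_λ : π(i₁)=i₁, π(i₂)=a₄, π(i₃)=i₃}, and {π ∈ C_λ : π(i₁)=a₄, π(i₂)=i₂, π(i₃)=i₃} has cardinality m satisfying n(n−1)(n−2)(n−3) · m = p(p−1)(n−p) · |C_λ|. -/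
open Equiv Finset

/-- The conjugacy class of permutations of `Fin n` with cycle type `lam`
(cycle type includes fixed points as parts of size 1, via `Equiv.Perm.partition`). -/
def conjClass (n : ℕ) (lam : n.Partition) : Finset (Equiv.Perm (Fin n)) :=
  Finset.univ.filter fun π => (Equiv.Perm.partition π).parts = lam.parts

/-!
Double counting. The symmetric group acts transitively on injective tuples `(x₁, …, xₖ, u, a)`, so
the number of `π` in a conjugation-invariant family that fix every `xᵢ` and send `u` to `a` does not
depend on the tuple. A given `π` satisfies this for as many tuples as there are choices of `k`
distinct fixed points of `π` and one non-fixed point `u`, since `a = π u` is then forced and is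
automatically distinct from the other entries.
-/

section DoubleCounting

variable {G X : Type*} [Group G] [MulAction G X] {R : G → X → Prop} [∀ g x, Decidable (R g x)]
  {C : Finset G}

lemma card_filter_smul_eq_of_conj_invariant (hC : ∀ g h, h * g * h⁻¹ ∈ C ↔ g ∈ C)
    (hR : ∀ g h x, R (h * g * h⁻¹) (h • x) ↔ R g x) (h : G) (x : X) :
    #{g ∈ C | R g (h • x)} = #{g ∈ C | R g x} := by
  refine (card_equiv (MulAut.conj h).toEquiv fun g => ?_).symm
  simp only [mem_filter, MulEquiv.toEquiv_eq_coe, EquivLike.coe_coe, MulAut.conj_apply, hC, hR]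

lemma card_mul_card_filter_eq_sum_of_isPretransitive [Fintype X] [MulAction.IsPretransitive G X]
    (hC : ∀ g h, h * g * h⁻¹ ∈ C ↔ g ∈ C)
    (hR : ∀ g h x, R (h * g * h⁻¹) (h • x) ↔ R g x) (x : X) :
    Fintype.card X * #{g ∈ C | R g x} = ∑ g ∈ C, #{y | R g y} := by
  have card_filter_eq (y : X) : #{g ∈ C | R g y} = #{g ∈ C | R g x} := by
    obtain ⟨h, rfl⟩ := MulAction.exists_smul_eq G x y
    exact card_filter_smul_eq_of_conj_invariant hC hR h x
  calc Fintype.card X * #{g ∈ C | R g x}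
      = ∑ y : X, #{g ∈ C | R g y} := by simp [card_filter_eq]
    _ = ∑ g ∈ C, #{y | R g y} := (sum_card_bipartiteAbove_eq_sum_card_bipartiteBelow R).symm

end DoubleCounting

section FixesAndMaps

variable {ι α : Type*}

lemma injective_sumElim_pair {f : ι → α} {u a : α} (hf : Function.Injective f)
    (hu : ∀ i, f i ≠ u) (ha : ∀ i, f i ≠ a) (hau : a ≠ u) :
    Function.Injective (Sum.elim f ![u, a]) := by
  refine hf.sumElim ?_ fun i j => ?_
  · simpa [Function.Injective, Fin.forall_fin_two, eq_comm] using hau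
  · fin_cases j
    exacts [hu i, ha i]

/-- The permutation `π` fixes the entries `x (inl i)` of the injective tuple `x` and maps the entry
`x (inr 0)` to `x (inr 1)`. -/
def FixesAndMaps (π : Perm α) (x : ι ⊕ Fin 2 ↪ α) : Prop :=
  (∀ i, π (x (.inl i)) = x (.inl i)) ∧ π (x (.inr 0)) = x (.inr 1)

instance [Fintype ι] [DecidableEq α] (π : Perm α) (x : ι ⊕ Fin 2 ↪ α) :
    Decidable (FixesAndMaps π x) :=
  inferInstanceAs (Decidable (_ ∧ _))

lemma fixesAndMaps_conj_smul_iff (π σ : Perm α) (x : ι ⊕ Fin 2 ↪ α) :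
    FixesAndMaps (σ * π * σ⁻¹) (σ • x) ↔ FixesAndMaps π x := by
  simp [FixesAndMaps, Function.Embedding.smul_apply]

variable [Fintype α] [DecidableEq α]

/-- The injective tuples `x` with `FixesAndMaps π x`, described as a tuple of distinct fixed points
of `π` together with one non-fixed point; the last entry of `x` is the image of the latter. -/
def fixesAndMapsEquiv (π : Perm α) :
    {x : ι ⊕ Fin 2 ↪ α // FixesAndMaps π x} ≃ (ι ↪ ↥(π.supportᶜ)) × π.support where
  toFun x :=
    (⟨fun i => ⟨x.1 (.inl i), by simpa using x.2.1 i⟩,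
      fun i j h => by simpa using congrArg Subtype.val h⟩,
     ⟨x.1 (.inr 0), by simp [x.2.2]⟩)
  invFun y :=
    ⟨⟨Sum.elim (fun i => (y.1 i : α)) ![(y.2 : α), π y.2],
      injective_sumElim_pair (Subtype.val_injective.comp y.1.injective)
        (fun i => (ne_of_mem_of_not_mem y.2.2 (mem_compl.1 (y.1 i).2)).symm)
        (fun i => (ne_of_mem_of_not_mem (Perm.apply_mem_support.2 y.2.2)
          (mem_compl.1 (y.1 i).2)).symm)
        (Perm.mem_support.1 y.2.2)⟩,
      fun i => Perm.notMem_support.1 (mem_compl.1 (y.1 i).2), rfl⟩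
  left_inv x := by
    ext (i | j)
    · rfl
    · fin_cases j
      · rfl
      · exact x.2.2
  right_inv _ := rfl

lemma card_filter_fixesAndMaps [Fintype ι] (π : Perm α) :
    #{x : ι ⊕ Fin 2 ↪ α | FixesAndMaps π x} =
      (#π.supportᶜ).descFactorial (Fintype.card ι) * #π.support := by
  classical
  rw [← Fintype.card_subtype, Fintype.card_congr (fixesAndMapsEquiv π), Fintype.card_prod,
    Fintype.card_embedding_eq, Fintype.card_coe, Fintype.card_coe]

variable {C : Finset (Perm α)} {S : Finset α} {u a : α}

theorem descFactorial_mul_card_filter_fixes_and_maps (hC : ∀ π σ, σ * π * σ⁻¹ ∈ C ↔ π ∈ C)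
    (hu : u ∉ S) (ha : a ∉ S) (hau : a ≠ u) :
    (Fintype.card α).descFactorial (#S + 2) * #{π ∈ C | (∀ x ∈ S, π x = x) ∧ π u = a} =
      ∑ π ∈ C, (#π.supportᶜ).descFactorial #S * #π.support := by
  let x : S ⊕ Fin 2 ↪ α :=
    ⟨Sum.elim (↑) ![u, a], injective_sumElim_pair Subtype.val_injective
      (fun i => ne_of_mem_of_not_mem i.2 hu) (fun i => ne_of_mem_of_not_mem i.2 ha) hau⟩
  have fixesAndMaps_x_iff (π : Perm α) :
      FixesAndMaps π x ↔ (∀ x ∈ S, π x = x) ∧ π u = a := by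
    simp [FixesAndMaps, x]
  have : MulAction.IsPretransitive (Perm α) (S ⊕ Fin 2 ↪ α) :=
    ⟨Perm.exists_smul_eq_embedding⟩
  have count := card_mul_card_filter_eq_sum_of_isPretransitive hC fixesAndMaps_conj_smul_iff x
  simpa only [fixesAndMaps_x_iff, card_filter_fixesAndMaps, Fintype.card_embedding_eq,
    Fintype.card_sum, Fintype.card_coe, Fintype.card_fin] using count

end FixesAndMaps

lemma cast_descFactorial_four {R : Type*} [Ring R] (n : ℕ) :
    (n.descFactorial 4 : R) = n * (n - 1) * (n - 2) * (n - 3) := by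
  simp only [← descPochhammer_eval_eq_descFactorial]
  simp [descPochhammer_succ_eval]

lemma count_one_parts_partition {α : Type*} [Fintype α] [DecidableEq α] (π : Perm α) :
    π.partition.parts.count 1 = #π.supportᶜ := by
  have one_notMem : 1 ∉ π.cycleType := fun h => by
    simpa using Perm.two_le_of_mem_cycleType h
  rw [Perm.parts_partition, Multiset.count_add, Multiset.count_eq_zero_of_notMem one_notMem,
    Multiset.count_replicate_self, zero_add, card_compl]

section ConjClass

variable {n : ℕ} {lam : n.Partition}

lemma conj_mem_conjClass_iff (π σ : Perm (Fin n)) :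
    σ * π * σ⁻¹ ∈ conjClass n lam ↔ π ∈ conjClass n lam := by
  have partition_conj : (σ * π * σ⁻¹).partition = π.partition :=
    Perm.partition_eq_of_isConj.1 (isConj_iff.2 ⟨σ, rfl⟩ : IsConj π _).symm
  simp [conjClass, partition_conj]

lemma card_compl_support_of_mem_conjClass {π : Perm (Fin n)} (hπ : π ∈ conjClass n lam) :
    #π.supportᶜ = lam.parts.count 1 := by
  rw [← count_one_parts_partition, (mem_filter.1 hπ).2]

lemma card_support_of_mem_conjClass {π : Perm (Fin n)} (hπ : π ∈ conjClass n lam) :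
    (#π.support : ℤ) = n - lam.parts.count 1 := by
  have card_add_card := card_add_card_compl π.support
  rw [card_compl_support_of_mem_conjClass hπ, Fintype.card_fin] at card_add_card
  lia

variable (lam) in
theorem stmt3_general {S : Finset (Fin n)} {u a : Fin n} (hu : u ∉ S) (ha : a ∉ S)
    (hau : a ≠ u) :
    (n.descFactorial (#S + 2) : ℤ) *
        #{π ∈ conjClass n lam | (∀ x ∈ S, π x = x) ∧ π u = a} =
      (lam.parts.count 1).descFactorial #S * (n - lam.parts.count 1) * #(conjClass n lam) := by
  have count : n.descFactorial (#S + 2) *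
        #{π ∈ conjClass n lam | (∀ x ∈ S, π x = x) ∧ π u = a} =
      ∑ π ∈ conjClass n lam, (#π.supportᶜ).descFactorial #S * #π.support := by
    -- On `Fin n` the bounded quantifier gets another decidability instance than in general.
    convert descFactorial_mul_card_filter_fixes_and_maps (C := conjClass n lam)
      conj_mem_conjClass_iff hu ha hau
    exact (Fintype.card_fin n).symm
  calc (n.descFactorial (#S + 2) : ℤ) *
        #{π ∈ conjClass n lam | (∀ x ∈ S, π x = x) ∧ π u = a}
      = ∑ π ∈ conjClass n lam, ((#π.supportᶜ).descFactorial #S * #π.support : ℤ) :=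
        mod_cast count
    _ = ∑ _π ∈ conjClass n lam,
          ((lam.parts.count 1).descFactorial #S * (n - lam.parts.count 1) : ℤ) :=
        sum_congr rfl fun π hπ => by
          rw [card_compl_support_of_mem_conjClass hπ, card_support_of_mem_conjClass hπ]
    _ = (lam.parts.count 1).descFactorial #S * (n - lam.parts.count 1) * #(conjClass n lam) := by
        rw [sum_const, nsmul_eq_mul, mul_comm]

lemma card_conjClass_filter_fixes_pair_and_maps {x y u a : Fin n} (hxy : x ≠ y) (hux : u ≠ x)
    (huy : u ≠ y) (hax : a ≠ x) (hay : a ≠ y) (hau : a ≠ u) :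
    (n : ℤ) * (n - 1) * (n - 2) * (n - 3) *
        #{π ∈ conjClass n lam | π x = x ∧ π y = y ∧ π u = a} =
      lam.parts.count 1 * (lam.parts.count 1 - 1) * (n - lam.parts.count 1) *
        #(conjClass n lam) := by
  simpa only [card_pair hxy, cast_descFactorial_four, Nat.cast_descFactorial_two, and_assoc,
    forall_mem_insert, mem_singleton, forall_eq, Nat.reduceAdd] using
    stmt3_general lam (S := {x, y}) (u := u) (a := a) (by simp [hux, huy])
      (by simp [hax, hay]) hau

end ConjClass

theorem stmt3 (n : ℕ) (hn : 4 ≤ n) (lam : n.Partition)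
    (p : ℕ) (hp : p = lam.parts.count 1)
    (i₁ i₂ i₃ : Fin n) (h12 : i₁ < i₂) (h23 : i₂ < i₃)
    (a₄ : Fin n) (ha1 : a₄ ≠ i₁) (ha2 : a₄ ≠ i₂) (ha3 : a₄ ≠ i₃) :
    ((n : ℤ) * ((n : ℤ) - 1) * ((n : ℤ) - 2) * ((n : ℤ) - 3) *
        (((conjClass n lam).filter fun π => π i₁ = i₁ ∧ π i₂ = i₂ ∧ π i₃ = a₄).card : ℤ)
      = (p : ℤ) * ((p : ℤ) - 1) * ((n : ℤ) - (p : ℤ)) * ((conjClass n lam).card : ℤ)) ∧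
    ((n : ℤ) * ((n : ℤ) - 1) * ((n : ℤ) - 2) * ((n : ℤ) - 3) *
        (((conjClass n lam).filter fun π => π i₁ = i₁ ∧ π i₂ = a₄ ∧ π i₃ = i₃).card : ℤ)
      = (p : ℤ) * ((p : ℤ) - 1) * ((n : ℤ) - (p : ℤ)) * ((conjClass n lam).card : ℤ)) ∧
    ((n : ℤ) * ((n : ℤ) - 1) * ((n : ℤ) - 2) * ((n : ℤ) - 3) *
        (((conjClass n lam).filter fun π => π i₁ = a₄ ∧ π i₂ = i₂ ∧ π i₃ = i₃).card : ℤ)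
      = (p : ℤ) * ((p : ℤ) - 1) * ((n : ℤ) - (p : ℤ)) * ((conjClass n lam).card : ℤ)) := by
  subst hp
  have h13 := h12.trans h23
  refine ⟨?_, ?_, ?_⟩
  · exact card_conjClass_filter_fixes_pair_and_maps h12.ne h13.ne' h23.ne' ha1 ha2 ha3
  · simpa only [and_comm (a := _ = a₄)] using
      card_conjClass_filter_fixes_pair_and_maps h13.ne h12.ne' h23.ne ha1 ha3 ha2
  · simpa only [and_comm (a := _ = a₄), and_assoc] using
      card_conjClass_filter_fixes_pair_and_maps h23.ne h12.ne h13.ne ha2 ha3 ha1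
end

section
/- Let n ≥ 3 and let λ be a partition of n. Then both Σ_{π ∈ C_λ} occ₍₂₋₃₋₁₎(π) and Σ_{π ∈ C_λ} occ₍₃₋₁₋₂₎(π) are equal to |C_λ| · ( C(n,3)/6 − (n+1)(3n−4)·X₁/120 − (n+1)·X₂/60 + (n+1)·X₃/30 − X₄/30 ), where occ₍₂₋₃₋₁₎(π) = #{(i,j,k) : 1 ≤ i < j < k ≤ n, π(k) < π(i) < π(j)} and occ₍₃₋₁₋₂₎(π) = #{(i,j,k) : 1 ≤ i < j < k ≤ n, π(j) < π(k) < π(i)} count occurrences of the classical patterns 231 and 312 in π. -/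
open Equiv Finset

/-!
The patterns 231 and 312 are the two elements of `S₃` with exactly two inversions, and
`π ↦ π⁻¹` preserves the conjugacy class while exchanging their occurrences. So each of the two sums
is half of the number of increasing triples on which `π` has two inversions, summed over the class,
and this can be counted over all injective triples `x` by symmetry.

Replacing `π` by its conjugates `σ π σ⁻¹` amounts to looking at the values of `x` and `π ∘ x` in a
uniformly random order. The probability of two inversions then depends only on which entries of
`π ∘ x` coincide with which entries of `x`, and is a polynomial in the corresponding entries of the
permutation matrix `P` of `π`. Summed over all injective `x`, its monomials give polynomials in `n`
and the traces of `P`, `P²`, `P³`, which are `p`, `p + 2q`, `p + 3r`.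
-/

open Function
open scoped Nat BigOperators

local notation "P" => Perm.permMatrix ℚ

section RelativeOrder

variable {ι α β : Type*}

/-- The relative order of the values of `f`, as a Boolean relation on the indices. -/
def relOrder [LinearOrder β] (f : ι → β) (i j : ι) : Bool :=
  decide (f i < f j)

variable [LinearOrder α] [LinearOrder β]

lemma exists_perm_relOrder_eq [Finite α] {f : α → β} (hf : Injective f) :
    ∃ τ : Perm α, relOrder τ = relOrder f := by
  have := Fintype.ofFinite α
  have card_image : #(univ.image f) = Fintype.card α := card_image_of_injective _ hf
  let e : univ.image f ≃o α :=
    ((univ.image f).orderIsoOfFin card_image).symm.trans (monoEquivOfFin α rfl)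
  let rank (a : α) : α := e ⟨f a, mem_image_of_mem f (mem_univ a)⟩
  have rank_injective : Injective rank := fun a b hab =>
    hf (congrArg Subtype.val (e.injective hab))
  refine ⟨Equiv.ofBijective rank rank_injective.bijective_of_finite, ?_⟩
  ext a b
  simp [relOrder, rank]

lemma expect_relOrder_comp_embedding [Fintype α] [Fintype β] {M : Type*} [AddCommMonoid M]
    [Module ℚ≥0 M] (u : α ↪ β) (F : (α → α → Bool) → M) :
    𝔼 σ : Perm β, F (relOrder (σ ∘ u)) = 𝔼 τ : Perm α, F (relOrder τ) := by
  have relabel (ρ : Perm α) :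
      𝔼 σ : Perm β, F (relOrder (σ ∘ u ∘ ρ)) = 𝔼 σ : Perm β, F (relOrder (σ ∘ u)) := by
    refine Fintype.expect_equiv (Equiv.mulRight (ρ.viaFintypeEmbedding u)) _ _ fun σ => ?_
    congr 2
    ext a
    simp
  have average_relabel (σ : Perm β) :
      𝔼 ρ : Perm α, F (relOrder (σ ∘ u ∘ ρ)) = 𝔼 τ : Perm α, F (relOrder τ) := by
    obtain ⟨τ, hτ⟩ := exists_perm_relOrder_eq (σ.injective.comp u.injective)
    refine Fintype.expect_equiv (Equiv.mulLeft τ) _ _ fun ρ => ?_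
    congr 1
    ext a b
    exact (congrFun₂ hτ (ρ a) (ρ b)).symm ▸ rfl
  calc 𝔼 σ : Perm β, F (relOrder (σ ∘ u))
      = 𝔼 ρ : Perm α, 𝔼 σ : Perm β, F (relOrder (σ ∘ u ∘ ρ)) := by
        simp only [relabel, Fintype.expect_const]
    _ = 𝔼 σ : Perm β, 𝔼 ρ : Perm α, F (relOrder (σ ∘ u ∘ ρ)) := expect_comm _ _ _
    _ = 𝔼 τ : Perm α, F (relOrder τ) := by
        simp only [average_relabel, Fintype.expect_const]

end RelativeOrder

section Inversions

variable {ι β : Type*}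

/-- Thirty times the probability that a uniformly random linear order makes the triples `x` and `y`
have exactly two inversions, once averaged over simultaneous relabellings of the rows and columns
of the coincidence matrix `E i j = [y i = x j]`. There is one monomial for each isomorphism type of
partial injection of `Fin 3`, with coefficients found by Möbius inversion; that of a fixed point
together with a 2-cycle vanishes. -/
def weight (E : Matrix (Fin 3) (Fin 3) ℚ) : ℚ :=
  10 - 9 * E 0 0 + 9 * E 0 1 + 3 * (E 0 0 * E 1 1) - 21 * (E 0 0 * E 1 2) - 9 * (E 0 1 * E 1 0)
    + 27 * (E 0 1 * E 1 2) - 4 * (E 0 0 * E 1 1 * E 2 2) + 4 * (E 0 1 * E 1 2 * E 2 0)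

/-- The partial injection `g` records the coincidences `g i = some j` of `y i` with `x j`. The model
is the pair `(x, y)` with exactly these coincidences in the smallest type that has room for it. -/
def coincidenceModel (g : Fin 3 → Option (Fin 3)) : Fin 3 ⊕ Fin 3 → Fin 3 ⊕ₗ {i // g i = none} :=
  Sum.elim (fun i => Sum.inlₗ i) fun i => match h : g i with
    | some j => Sum.inlₗ j
    | none => Sum.inrₗ ⟨i, h⟩

lemma exists_embedding_coincidenceModel {x y : Fin 3 → β} (hx : Injective x) (hy : Injective y) :
    ∃ (g : Fin 3 → Option (Fin 3)) (u : Fin 3 ⊕ₗ {i // g i = none} ↪ β),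
      (∀ i j, g i = some j ↔ y i = x j) ∧ u ∘ coincidenceModel g = Sum.elim x y := by
  let g i := partialInv x (y i)
  have hg (i j) : g i = some j ↔ y i = x j := (hx.isPartialInv j (y i)).trans eq_comm
  have notMem {i j} (hi : g i = none) : x j ≠ y i := fun h => by simp [(hg i j).2 h.symm] at hi
  let u : Fin 3 ⊕ₗ {i // g i = none} ↪ β :=
    ⟨Sum.elim x (y ∘ Subtype.val) ∘ ofLex, (hx.sumElim (hy.comp Subtype.val_injective)
      fun j i => notMem i.2).comp ofLex.injective⟩
  refine ⟨g, u, hg, funext <| Sum.rec (fun i => rfl) fun i => ?_⟩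
  simp only [comp_apply, coincidenceModel, Sum.elim_inr]
  split
  next j h => exact ((hg i j).1 h).symm
  next h => rfl

variable [LinearOrder β]

/-- The number of index pairs that `x` puts in increasing and `y` in decreasing order. For
increasing `x` this is the number of inversions of the word `y`. -/
def inversionCount [Fintype ι] (x y : ι → β) : ℕ :=
  #{ij : ι × ι | x ij.1 < x ij.2 ∧ y ij.2 < y ij.1}

lemma inversionCount_comp_perm [Fintype ι] (x y : ι → β) (ρ : Perm ι) :
    inversionCount (x ∘ ρ) (y ∘ ρ) = inversionCount x y :=
  card_equiv (ρ.prodCongr ρ) fun ij => by simp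

/-- The number of pairs of indices on which the two halves of a relative order disagree: the form
that `inversionCount` takes when it is computed from the relative order of `Sum.elim x y`. -/
def discordantPairs (R : Fin 3 ⊕ Fin 3 → Fin 3 ⊕ Fin 3 → Bool) : ℕ :=
  let disagree i j := (R (.inl i) (.inl j) ^^ R (.inr i) (.inr j)).toNat
  disagree 0 1 + disagree 0 2 + disagree 1 2

lemma toNat_relOrder_xor_relOrder {x y : ι → β} {i j : ι} (hx : x i ≠ x j) (hy : y i ≠ y j) :
    (relOrder x i j ^^ relOrder y i j).toNat =
      (if x i < x j ∧ y j < y i then 1 else 0) + if x j < x i ∧ y i < y j then 1 else 0 := by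
  rcases hx.lt_or_gt with hx | hx <;> rcases hy.lt_or_gt with hy | hy <;>
    simp [relOrder, hx, hy, hx.not_gt, hy.not_gt]

lemma inversionCount_eq_discordantPairs {x y : Fin 3 → β} (hx : Injective x) (hy : Injective y) :
    inversionCount x y = discordantPairs (relOrder (Sum.elim x y)) := by
  have disagree {i j : Fin 3} (hij : i ≠ j) :=
    toNat_relOrder_xor_relOrder (hx.ne hij) (hy.ne hij)
  change _ = (relOrder x 0 1 ^^ relOrder y 0 1).toNat + (relOrder x 0 2 ^^ relOrder y 0 2).toNat +
    (relOrder x 1 2 ^^ relOrder y 1 2).toNat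
  rw [disagree (by decide), disagree (by decide), disagree (by decide)]
  simp only [inversionCount, card_filter, Fintype.sum_prod_type, Fin.sum_univ_three, lt_irrefl,
    and_self, if_false]
  ring

-- A finite check: 34 partial injections `g`, each with at most 6! permutations `τ`.
set_option maxRecDepth 100000 in
lemma card_discordantPairs_coincidenceModel (g : Fin 3 → Option (Fin 3))
    (hg : ∀ i i' j, g i = some j → g i' = some j → i = i') :
    180 * (#{τ : Perm (Fin 3 ⊕ₗ {i // g i = none}) |
        discordantPairs (relOrder (τ ∘ coincidenceModel g)) = 2} : ℚ) =
      (3 + Fintype.card {i // g i = none})! *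
        ∑ ρ : Perm (Fin 3), weight (.of fun i j => if g (ρ i) = some (ρ j) then 1 else 0) := by
  revert g
  decide +kernel

lemma expect_discordantPairs_coincidenceModel (g : Fin 3 → Option (Fin 3))
    (hg : ∀ i i' j, g i = some j → g i' = some j → i = i') :
    𝔼 τ : Perm (Fin 3 ⊕ₗ {i // g i = none}),
        (if discordantPairs (relOrder (τ ∘ coincidenceModel g)) = 2 then 1 else 0 : ℚ) =
      (∑ ρ : Perm (Fin 3),
        weight (.of fun i j => if g (ρ i) = some (ρ j) then 1 else 0)) / 180 := by
  rw [Fintype.expect_eq_sum_div_card, Fintype.card_perm, Fintype.card_lex, Fintype.card_sum,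
    Fintype.card_fin, sum_boole, div_eq_div_iff (by positivity) (by norm_num), mul_comm,
    card_discordantPairs_coincidenceModel g hg, mul_comm]

theorem expect_inversionCount_eq_two [Fintype β] {x y : Fin 3 → β}
    (hx : Injective x) (hy : Injective y) :
    𝔼 σ : Perm β, (if inversionCount (σ ∘ x) (σ ∘ y) = 2 then 1 else 0 : ℚ) =
      (∑ ρ : Perm (Fin 3), weight (.of fun i j => if y (ρ i) = x (ρ j) then 1 else 0)) / 180 := by
  obtain ⟨g, u, hg, hu⟩ := exists_embedding_coincidenceModel hx hy
  have g_injective i i' j (hi : g i = some j) (hi' : g i' = some j) : i = i' :=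
    hy (((hg i j).1 hi).trans ((hg i' j).1 hi').symm)
  have inversions (σ : Perm β) : inversionCount (σ ∘ x) (σ ∘ y) =
      discordantPairs (relOrder (σ ∘ u ∘ coincidenceModel g)) := by
    rw [inversionCount_eq_discordantPairs (σ.injective.comp hx) (σ.injective.comp hy), hu,
      Sum.comp_elim]
  simp only [inversions, ← hg]
  rw [← expect_discordantPairs_coincidenceModel g g_injective]
  exact expect_relOrder_comp_embedding u fun R =>
    if discordantPairs (fun a b => R (coincidenceModel g a) (coincidenceModel g b)) = 2
      then 1 else 0

end Inversions

section Triples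

lemma cast_choose_three (n : ℕ) : (n.choose 3 : ℚ) = n * (n - 1) * (n - 2) / 6 := by
  rw [Nat.cast_choose_eq_descPochhammer_div]
  simp [descPochhammer_succ_eval, Nat.factorial]

variable {α : Type*}

/-- Triples as functions on `Fin 3`. -/
def tripleEquiv (α : Type*) : α × α × α ≃ (Fin 3 → α) where
  toFun t := ![t.1, t.2.1, t.2.2]
  invFun x := (x 0, x 1, x 2)
  left_inv _ := rfl
  right_inv x := by
    ext i
    fin_cases i <;> rfl

lemma injective_vecCons_three {i j k : α} : Injective ![i, j, k] ↔ i ≠ j ∧ i ≠ k ∧ j ≠ k := by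
  simp [← List.nodup_ofFn, and_assoc]

lemma sum_fin_three_arrow [Fintype α] {M : Type*} [AddCommMonoid M] (f : (Fin 3 → α) → M) :
    ∑ x, f x = ∑ i, ∑ j, ∑ k, f ![i, j, k] := by
  rw [← (tripleEquiv α).sum_comp, Fintype.sum_prod_type]
  simp only [Fintype.sum_prod_type]
  rfl

lemma sum_injective_fin_three [Fintype α] [DecidableEq α] (f : (Fin 3 → α) → ℚ) :
    ∑ x with Injective x, f x = ∑ i, ∑ j, ∑ k, f ![i, j, k]
      - ∑ i, ∑ j, f ![i, j, i] - ∑ i, ∑ j, f ![i, j, j] - ∑ i, ∑ j, f ![i, i, j]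
      + 2 * ∑ i, f ![i, i, i] := by
  have incl_excl (i j k : α) : (if Injective ![i, j, k] then f ![i, j, k] else 0) = f ![i, j, k]
      - (if i = k then f ![i, j, k] else 0) - (if j = k then f ![i, j, k] else 0)
      - (if i = j then f ![i, j, k] else 0)
      + 2 * if i = j then if i = k then f ![i, j, k] else 0 else 0 := by
    simp only [injective_vecCons_three]
    grind
  simp only [sum_filter, sum_fin_three_arrow, incl_excl, sum_sub_distrib, sum_add_distrib,
    ← mul_sum, sum_ite_irrel, sum_const_zero, sum_ite_eq, mem_univ, if_true]

end Triples

section Cycles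

variable {α : Type*} [Fintype α] [DecidableEq α]

lemma card_support_cycleOf_eq_minimalPeriod {π : Perm α} {x : α} (hx : π x ≠ x) :
    #(π.cycleOf x).support = minimalPeriod π x := by
  have hc := Perm.isCycle_cycleOf π hx
  have hx' : π.cycleOf x x ≠ x := by rwa [Perm.cycleOf_apply_self]
  refine Nat.dvd_right_iff_eq.1 fun k => ?_
  rw [← hc.orderOf, orderOf_dvd_iff_pow_eq_one, hc.pow_eq_one_iff' hx',
    Perm.cycleOf_pow_apply_self, ← isPeriodicPt_iff_minimalPeriod_dvd, IsPeriodicPt, IsFixedPt,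
    Perm.iterate_eq_pow]

lemma card_minimalPeriod_eq_one (π : Perm α) :
    #{x | minimalPeriod π x = 1} = π.partition.parts.count 1 := by
  have one_notMem : 1 ∉ π.cycleType := fun h => by simpa using Perm.two_le_of_mem_cycleType h
  rw [Perm.parts_partition, Multiset.count_add, Multiset.count_eq_zero.2 one_notMem,
    Multiset.count_replicate_self, zero_add, ← card_compl]
  congr 1
  ext x
  simp [IsFixedPt]

lemma card_minimalPeriod_eq_of_two_le (π : Perm α) {d : ℕ} (hd : 2 ≤ d) :
    #{x | minimalPeriod π x = d} = d * π.cycleType.count d := by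
  have union_cycles : ({x | minimalPeriod π x = d} : Finset α) =
      ({c ∈ π.cycleFactorsFinset | #c.support = d} : Finset (Perm α)).biUnion Perm.support := by
    ext x
    simp only [mem_filter, mem_univ, true_and, mem_biUnion]
    constructor
    · intro hxd
      have hx : π x ≠ x := fun h => by
        rw [minimalPeriod_eq_one_iff_isFixedPt.2 h] at hxd; omega
      exact ⟨π.cycleOf x, ⟨Perm.cycleOf_mem_cycleFactorsFinset_iff.2 (Perm.mem_support.2 hx),
        (card_support_cycleOf_eq_minimalPeriod hx).trans hxd⟩, by simpa using hx⟩
    · rintro ⟨c, ⟨hc, hcd⟩, hxc⟩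
      have hx : π x ≠ x := Perm.mem_support.1 (Perm.mem_cycleFactorsFinset_support_le hc hxc)
      rw [← card_support_cycleOf_eq_minimalPeriod hx, ← Perm.cycle_is_cycleOf hxc hc, hcd]
  rw [union_cycles, card_biUnion, sum_congr rfl fun c hc => (mem_filter.1 hc).2, sum_const,
    smul_eq_mul, mul_comm, Perm.cycleType_def, Multiset.count_map]
  · congr 1
    rw [card_def, filter_val]
    simp only [comp_apply, eq_comm]
  · intro c hc c' hc' hne
    exact (Perm.cycleFactorsFinset_pairwise_disjoint π (mem_filter.1 hc).1
      (mem_filter.1 hc').1 hne).disjoint_support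

lemma card_minimalPeriod_eq (π : Perm α) {d : ℕ} (hd : d ≠ 0) :
    #{x | minimalPeriod π x = d} = d * π.partition.parts.count d := by
  obtain rfl | hd2 : d = 1 ∨ 2 ≤ d := by omega
  · rw [card_minimalPeriod_eq_one, one_mul]
  · rw [card_minimalPeriod_eq_of_two_le π hd2, Perm.parts_partition, Multiset.count_add,
      Multiset.count_replicate, if_neg (by omega), add_zero]

lemma card_fixed_iterate (π : Perm α) {k : ℕ} (hk : k ≠ 0) :
    #{x | π^[k] x = x} = ∑ d ∈ k.divisors, d * π.partition.parts.count d := by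
  rw [card_eq_sum_card_fiberwise (f := minimalPeriod π) (t := k.divisors)]
  · refine sum_congr rfl fun d hd => ?_
    rw [← card_minimalPeriod_eq π (Nat.pos_of_mem_divisors hd).ne', filter_filter]
    congr 1
    refine filter_congr fun x _ => and_iff_right_of_imp ?_
    rintro rfl
    exact isPeriodicPt_iff_minimalPeriod_dvd.2 (Nat.dvd_of_mem_divisors hd)
  · intro x hx
    have fixed : π^[k] x = x := by simpa using hx
    simpa [hk] using IsPeriodicPt.minimalPeriod_dvd fixed

end Cycles

section PermMatrix

variable {α : Type*} [DecidableEq α] (π : Perm α)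

lemma permMatrix_self_mul (i j : α) : P π i i * P π i j = if i = j then P π i i else 0 := by
  simp only [PEquiv.toMatrix_apply, toPEquiv_apply, Option.mem_some_iff]
  grind

lemma permMatrix_mul_self (i j : α) : P π i j * P π j j = if i = j then P π i i else 0 := by
  simp only [PEquiv.toMatrix_apply, toPEquiv_apply, Option.mem_some_iff]
  grind [π.injective.eq_iff]

variable [Fintype α]

lemma sum_permMatrix_row (i : α) : ∑ j, P π i j = 1 :=
  sum_row_of_mem_doublyStochastic permMatrix_mem_doublyStochastic i

lemma sum_permMatrix_col (j : α) : ∑ i, P π i j = 1 :=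
  sum_col_of_mem_doublyStochastic permMatrix_mem_doublyStochastic j

lemma trace_sq_eq_sum {R : Type*} [Semiring R] (M : Matrix α α R) :
    (M ^ 2).trace = ∑ i, ∑ j, M i j * M j i := by
  simp only [Matrix.trace, Matrix.diag, Matrix.mul_apply, pow_two]

lemma trace_cube_eq_sum {R : Type*} [Semiring R] (M : Matrix α α R) :
    (M ^ 3).trace = ∑ i, ∑ j, ∑ k, M i j * M j k * M k i := by
  simp only [Matrix.trace, Matrix.diag, Matrix.mul_apply, pow_succ, pow_zero, one_mul, sum_mul]
  exact sum_congr rfl fun i _ => sum_comm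

lemma sum_injective_const (c : ℚ) : ∑ x : Fin 3 → α with Injective x, c =
    c * (Fintype.card α * (Fintype.card α - 1) * (Fintype.card α - 2)) := by
  rw [sum_injective_fin_three]
  simp only [sum_const, card_univ, nsmul_eq_mul]
  ring

lemma sum_injective_fixed : ∑ x : Fin 3 → α with Injective x, P π (x 0) (x 0) =
    (P π).trace * (Fintype.card α - 1) * (Fintype.card α - 2) := by
  rw [sum_injective_fin_three]
  simp only [Matrix.cons_val, sum_const, card_univ, nsmul_eq_mul, ← mul_sum, Matrix.trace,
    Matrix.diag]
  ring

lemma sum_injective_edge : ∑ x : Fin 3 → α with Injective x, P π (x 0) (x 1) =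
    (Fintype.card α - (P π).trace) * (Fintype.card α - 2) := by
  rw [sum_injective_fin_three]
  simp only [Matrix.cons_val, sum_permMatrix_row, sum_const, card_univ, nsmul_eq_mul, ← mul_sum,
    Matrix.trace, Matrix.diag]
  ring

lemma sum_injective_fixed_fixed :
    ∑ x : Fin 3 → α with Injective x, P π (x 0) (x 0) * P π (x 1) (x 1) =
      (P π).trace * ((P π).trace - 1) * (Fintype.card α - 2) := by
  rw [sum_injective_fin_three]
  simp only [Matrix.cons_val, permMatrix_self_mul, if_true, sum_const, card_univ, nsmul_eq_mul,
    ← mul_sum, ← sum_mul, Matrix.trace, Matrix.diag]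
  ring

lemma sum_injective_fixed_edge :
    ∑ x : Fin 3 → α with Injective x, P π (x 0) (x 0) * P π (x 1) (x 2) =
      (P π).trace * (Fintype.card α - (P π).trace) := by
  rw [sum_injective_fin_three]
  simp only [Matrix.cons_val, permMatrix_self_mul, if_true, sum_permMatrix_row,
    sum_permMatrix_col, sum_const, card_univ, nsmul_eq_mul, ← mul_sum, ← sum_mul, Matrix.trace,
    Matrix.diag, sum_ite_eq, mem_univ]
  ring

lemma sum_injective_twoCycle :
    ∑ x : Fin 3 → α with Injective x, P π (x 0) (x 1) * P π (x 1) (x 0) =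
      ((P π ^ 2).trace - (P π).trace) * (Fintype.card α - 2) := by
  rw [sum_injective_fin_three, trace_sq_eq_sum, Matrix.trace]
  simp only [Matrix.cons_val, permMatrix_self_mul, if_true, sum_const, card_univ, nsmul_eq_mul,
    ← mul_sum, Matrix.diag]
  ring

lemma sum_injective_path :
    ∑ x : Fin 3 → α with Injective x, P π (x 0) (x 1) * P π (x 1) (x 2) =
      Fintype.card α - (P π ^ 2).trace := by
  rw [sum_injective_fin_three, trace_sq_eq_sum]
  simp only [Matrix.cons_val, permMatrix_self_mul, permMatrix_mul_self, sum_permMatrix_row,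
    sum_const, card_univ, nsmul_eq_mul, mul_one, ← mul_sum, sum_ite_eq, mem_univ, if_true]
  ring

lemma sum_injective_fixed_fixed_fixed :
    ∑ x : Fin 3 → α with Injective x, P π (x 0) (x 0) * P π (x 1) (x 1) * P π (x 2) (x 2) =
      (P π).trace * ((P π).trace - 1) * ((P π).trace - 2) := by
  have idem i : P π i i * P π i i = P π i i := by rw [permMatrix_self_mul, if_pos rfl]
  have idem_mul i j : P π i i * P π j j * P π i i = P π i i * P π j j := by
    rw [mul_right_comm, idem]
  have mul_idem i j : P π i i * P π j j * P π j j = P π i i * P π j j := by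
    rw [mul_assoc, idem]
  rw [sum_injective_fin_three]
  simp only [Matrix.cons_val, idem_mul, mul_idem, idem, ← mul_sum, ← sum_mul, Matrix.trace,
    Matrix.diag]
  ring

lemma sum_injective_threeCycle :
    ∑ x : Fin 3 → α with Injective x, P π (x 0) (x 1) * P π (x 1) (x 2) * P π (x 2) (x 0) =
      (P π ^ 3).trace - (P π).trace := by
  have swap_mul_self i j : P π i j * P π j i * P π i i = if i = j then P π i i else 0 := by
    rw [mul_right_comm]
    grind [permMatrix_self_mul, permMatrix_mul_self]
  rw [sum_injective_fin_three, trace_cube_eq_sum, Matrix.trace]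
  simp only [Matrix.cons_val, swap_mul_self, permMatrix_self_mul, permMatrix_mul_self, ite_mul,
    zero_mul, sum_ite_eq, mem_univ, if_true, Matrix.diag]
  ring

lemma sum_weight_submatrix_permMatrix {n p s t : ℚ} (hn : n = Fintype.card α)
    (hp : p = (P π).trace) (hs : s = (P π ^ 2).trace) (ht : t = (P π ^ 3).trace) :
    ∑ x with Injective x, weight ((P π).submatrix x x) = 10 * (n * (n - 1) * (n - 2))
      - 9 * (p * (n - 1) * (n - 2)) + 9 * ((n - p) * (n - 2)) + 3 * (p * (p - 1) * (n - 2))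
      - 21 * (p * (n - p)) - 9 * ((s - p) * (n - 2)) + 27 * (n - s)
      - 4 * (p * (p - 1) * (p - 2)) + 4 * (t - p) := by
  simp only [weight, Matrix.submatrix_apply, sum_add_distrib, sum_sub_distrib, ← mul_sum,
    sum_injective_const, sum_injective_fixed, sum_injective_edge, sum_injective_fixed_fixed,
    sum_injective_fixed_edge, sum_injective_twoCycle, sum_injective_path,
    sum_injective_fixed_fixed_fixed, sum_injective_threeCycle, hn, hp, hs, ht]

lemma permMatrix_pow (k : ℕ) : P π ^ k = P (π ^ k) := by
  induction k with
  | zero => simp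
  | succ k ih => rw [pow_succ, ih, pow_succ', Matrix.permMatrix_mul]

lemma trace_permMatrix_pow {k : ℕ} (hk : k ≠ 0) :
    (P π ^ k).trace = ∑ d ∈ k.divisors, (d * π.partition.parts.count d : ℚ) := by
  have trace_eq : (P π ^ k).trace = #{x | π^[k] x = x} := by
    rw [permMatrix_pow, Matrix.trace_permutation, Set.ncard_eq_toFinset_card', Perm.iterate_eq_pow]
    congr 2
    ext x
    simp [IsFixedPt]
  rw [trace_eq, card_fixed_iterate π hk]
  push_cast
  rfl

lemma sum_weight_eq_partition_counts {n : ℕ} {p q r : ℚ} (hn : Fintype.card α = n)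
    (hp : p = π.partition.parts.count 1) (hq : q = π.partition.parts.count 2)
    (hr : r = π.partition.parts.count 3) :
    (∑ x with Injective x, weight ((P π).submatrix x x)) / 360 =
      n.choose 3 / 6 - (n + 1) * (3 * n - 4) * (p - 1) / 120
        - (n + 1) * ((p - 1) * (p - 2) / 2 + q - 1) / 60
        + (n + 1) * ((p - 1) * (p - 2) / 2 - q) / 30
        - ((p - 1) * (p - 2) * (p - 3) / 3 - p - r + 2) / 30 := by
  have trace_one : p = (P π).trace := by
    rw [← pow_one (P π), trace_permMatrix_pow π one_ne_zero, Nat.divisors_one, sum_singleton, hp,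
      Nat.cast_one, one_mul]
  have trace_two : p + 2 * q = (P π ^ 2).trace := by
    rw [trace_permMatrix_pow π two_ne_zero, Nat.Prime.sum_divisors Nat.prime_two, hp, hq]
    push_cast
    ring
  have trace_three : p + 3 * r = (P π ^ 3).trace := by
    rw [trace_permMatrix_pow π three_ne_zero, Nat.Prime.sum_divisors Nat.prime_three, hp, hr]
    push_cast
    ring
  rw [sum_weight_submatrix_permMatrix π (by rw [hn]) trace_one trace_two trace_three,
    cast_choose_three]
  ring

end PermMatrix

section Occurrences

variable {α : Type*} [LinearOrder α]

lemma strictMono_fin_three {x : Fin 3 → α} : StrictMono x ↔ x 0 < x 1 ∧ x 1 < x 2 := by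
  simp [Fin.strictMono_iff_lt_succ, Fin.forall_fin_two]

lemma inversionCount_eq_two_iff {x y : Fin 3 → α} (hx : StrictMono x) (hy : Injective y) :
    inversionCount x y = 2 ↔ y 2 < y 0 ∧ y 0 < y 1 ∨ y 1 < y 2 ∧ y 2 < y 0 := by
  have h01 : y 0 ≠ y 1 := hy.ne (by decide)
  have h12 : y 1 ≠ y 2 := hy.ne (by decide)
  simp only [inversionCount, card_filter, Fintype.sum_prod_type, Fin.sum_univ_three,
    hx.lt_iff_lt]
  grind

variable [Fintype α]

lemma sum_injective_eq_factorial_mul_sum_strictMono {k : ℕ} (f : (Fin k → α) → ℚ)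
    (hf : ∀ x (ρ : Perm (Fin k)), f (x ∘ ρ) = f x) :
    ∑ x with Injective x, f x = k ! * ∑ x with StrictMono x, f x := by
  calc ∑ x with Injective x, f x
      = ∑ xρ ∈ ({x | StrictMono x} : Finset (Fin k → α)) ×ˢ (univ : Finset (Perm (Fin k))),
          f xρ.1 := by
        symm
        refine sum_bij (fun xρ _ => xρ.1 ∘ xρ.2) ?_ ?_ ?_ fun xρ _ => (hf _ _).symm
        · intro xρ hx
          simp only [mem_product, mem_filter_univ, mem_univ, and_true] at hx ⊢
          exact hx.injective.comp xρ.2.injective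
        · rintro ⟨x, ρ⟩ hx ⟨x', ρ'⟩ hx' h
          simp only [mem_product, mem_filter_univ, mem_univ, and_true] at hx hx' h
          obtain rfl : x = x' := (hx.range_inj hx').1 <| by
            rw [← ρ.surjective.range_comp, h, ρ'.surjective.range_comp]
          exact Prod.ext rfl (Equiv.ext fun i => hx.injective (congrFun h i))
        · intro y hy
          have sorted : StrictMono (y ∘ Tuple.sort y) :=
            (Tuple.monotone_sort y).strictMono_of_injective
              (((mem_filter_univ y).1 hy).comp (Tuple.sort y).injective)
          exact ⟨(y ∘ Tuple.sort y, (Tuple.sort y)⁻¹), by simpa using sorted, by ext; simp⟩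
    _ = k ! * ∑ x with StrictMono x, f x := by
        simp [sum_product, Fintype.card_perm, mul_sum]

/-- The occurrences of the pattern 231 in `π`, as triples of positions. -/
def occ231 (π : Perm α) : Finset (α × α × α) :=
  {x | x.1 < x.2.1 ∧ x.2.1 < x.2.2 ∧ π x.2.2 < π x.1 ∧ π x.1 < π x.2.1}

/-- The occurrences of the pattern 312 in `π`, as triples of positions. -/
def occ312 (π : Perm α) : Finset (α × α × α) :=
  {x | x.1 < x.2.1 ∧ x.2.1 < x.2.2 ∧ π x.2.1 < π x.2.2 ∧ π x.2.2 < π x.1}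

lemma card_occ231_inv (π : Perm α) : #(occ231 π⁻¹) = #(occ312 π) := by
  let rotate : α × α × α ≃ α × α × α :=
    ⟨fun x => (x.2.2, x.1, x.2.1), fun x => (x.2.1, x.2.2, x.1), fun _ => rfl, fun _ => rfl⟩
  refine card_equiv (rotate.trans (π⁻¹.prodCongr (π⁻¹.prodCongr π⁻¹))) fun x => ?_
  simp only [occ231, occ312, rotate, Perm.coe_inv, mem_filter, mem_univ, true_and, trans_apply,
    coe_fn_mk, prodCongr_apply, Prod.map_apply, apply_symm_apply]
  tauto

lemma card_strictMono_inversionCount_eq_two (π : Perm α) :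
    #{x : Fin 3 → α | StrictMono x ∧ inversionCount x (π ∘ x) = 2} =
      #(occ231 π) + #(occ312 π) := by
  have disjoint : Disjoint (occ231 π) (occ312 π) :=
    disjoint_filter.2 fun _ _ h h' => h.2.2.2.not_gt (h'.2.2.1.trans h'.2.2.2)
  rw [← card_union_of_disjoint disjoint]
  symm
  refine card_equiv (tripleEquiv α) fun t => ?_
  have strictMono_iff : StrictMono (tripleEquiv α t) ↔ t.1 < t.2.1 ∧ t.2.1 < t.2.2 :=
    strictMono_fin_three
  have inversions_iff (hx : StrictMono (tripleEquiv α t)) :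
      inversionCount (tripleEquiv α t) (π ∘ tripleEquiv α t) = 2 ↔
        π t.2.2 < π t.1 ∧ π t.1 < π t.2.1 ∨ π t.2.1 < π t.2.2 ∧ π t.2.2 < π t.1 :=
    inversionCount_eq_two_iff hx (π.injective.comp hx.injective)
  simp only [occ231, occ312, mem_union, mem_filter_univ]
  rw [and_congr_right inversions_iff, strictMono_iff]
  tauto

lemma sum_injective_inversionCount_eq_two (π : Perm α) :
    ∑ x : Fin 3 → α with Injective x, (if inversionCount x (π ∘ x) = 2 then 1 else 0 : ℚ) =
      6 * (#(occ231 π) + #(occ312 π)) := by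
  have symmetric (x : Fin 3 → α) (ρ : Perm (Fin 3)) :
      inversionCount (x ∘ ρ) (π ∘ x ∘ ρ) = inversionCount x (π ∘ x) :=
    inversionCount_comp_perm x (π ∘ x) ρ
  rw [sum_injective_eq_factorial_mul_sum_strictMono _ fun x ρ => by rw [symmetric], sum_boole,
    filter_filter, card_strictMono_inversionCount_eq_two, Nat.cast_add]
  norm_num [Nat.factorial]

lemma sum_injective_inversionCount_conj (π σ : Perm α) :
    ∑ x : Fin 3 → α with Injective x,
        (if inversionCount x ((σ * π * σ⁻¹) ∘ x) = 2 then 1 else 0 : ℚ) =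
      ∑ x : Fin 3 → α with Injective x,
        (if inversionCount (σ ∘ x) (σ ∘ π ∘ x) = 2 then 1 else 0 : ℚ) := by
  symm
  refine sum_equiv ((Equiv.refl (Fin 3)).arrowCongr σ) (fun x => ?_) fun x _ => ?_
  · exact (mem_filter_univ x).trans <|
      (σ.comp_injective x).symm.trans (mem_filter_univ (σ ∘ x)).symm
  · have conj_comp : (σ * π * σ⁻¹) ∘ σ ∘ x = σ ∘ π ∘ x := by
      ext
      simp
    rw [← conj_comp]
    rfl

lemma sum_injective_sum_weight_perm (π : Perm α) :
    ∑ x : Fin 3 → α with Injective x, ∑ ρ : Perm (Fin 3),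
        weight ((P π).submatrix (x ∘ ρ) (x ∘ ρ)) =
      6 * ∑ x : Fin 3 → α with Injective x, weight ((P π).submatrix x x) := by
  have relabel (ρ : Perm (Fin 3)) :
      ∑ x : Fin 3 → α with Injective x, weight ((P π).submatrix (x ∘ ρ) (x ∘ ρ)) =
        ∑ x : Fin 3 → α with Injective x, weight ((P π).submatrix x x) :=
    sum_equiv (ρ.symm.arrowCongr (Equiv.refl α))
      (fun x => (mem_filter_univ x).trans <|
        (ρ.injective_comp x).symm.trans (mem_filter_univ (x ∘ ρ)).symm) fun x _ => rfl
  rw [sum_comm, sum_congr rfl fun ρ _ => relabel ρ, sum_const, card_univ, Fintype.card_perm,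
    Fintype.card_fin, nsmul_eq_mul]
  norm_num [Nat.factorial]

theorem expect_card_occ_conj (π : Perm α) :
    𝔼 σ : Perm α, (#(occ231 (σ * π * σ⁻¹)) + #(occ312 (σ * π * σ⁻¹)) : ℚ) =
      (∑ x with Injective x, weight ((P π).submatrix x x)) / 180 := by
  have inversions (x : Fin 3 → α) (hx : Injective x) :
      𝔼 σ : Perm α, (if inversionCount (σ ∘ x) (σ ∘ π ∘ x) = 2 then 1 else 0 : ℚ) =
        (∑ ρ : Perm (Fin 3), weight ((P π).submatrix (x ∘ ρ) (x ∘ ρ))) / 180 := by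
    rw [expect_inversionCount_eq_two hx (π.injective.comp hx)]
    congr! with ρ
    ext i j
    simp [PEquiv.toMatrix_apply]
  have six_mul : 6 * 𝔼 σ : Perm α, (#(occ231 (σ * π * σ⁻¹)) + #(occ312 (σ * π * σ⁻¹)) : ℚ) =
      6 * ((∑ x with Injective x, weight ((P π).submatrix x x)) / 180) := by
    rw [mul_expect]
    simp only [← sum_injective_inversionCount_eq_two, sum_injective_inversionCount_conj]
    rw [expect_sum_comm, sum_congr rfl fun x hx => inversions x ((mem_filter_univ x).1 hx),
      ← sum_div, sum_injective_sum_weight_perm, mul_div_assoc]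
  exact mul_left_cancel₀ (by norm_num) six_mul

end Occurrences

section ConjClass

variable {n : ℕ} {lam : n.Partition}

lemma sum_conjClass_inv (f : Perm (Fin n) → ℚ) :
    ∑ π ∈ conjClass n lam, f π⁻¹ = ∑ π ∈ conjClass n lam, f π :=
  sum_equiv (Equiv.inv _)
    (fun π => by simp [conjClass, Perm.parts_partition, Perm.cycleType_inv]) fun _ _ => rfl

lemma sum_conjClass_expect_conj (f : Perm (Fin n) → ℚ) :
    ∑ π ∈ conjClass n lam, 𝔼 σ : Perm (Fin n), f (σ * π * σ⁻¹) = ∑ π ∈ conjClass n lam, f π := by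
  have parts_conj (π σ : Perm (Fin n)) :
      (σ * π * σ⁻¹).partition.parts = π.partition.parts := by
    rw [← Perm.partition_eq_of_isConj.1 (isConj_iff.2 ⟨σ, rfl⟩ : IsConj π (σ * π * σ⁻¹))]
  have conj_invariant (σ : Perm (Fin n)) :
      ∑ π ∈ conjClass n lam, f (σ * π * σ⁻¹) = ∑ π ∈ conjClass n lam, f π :=
    sum_equiv (MulAut.conj σ).toEquiv (fun π => by simp [conjClass, parts_conj]) fun _ _ => rfl
  rw [← expect_sum_comm]
  simp only [conj_invariant, Fintype.expect_const]

lemma sum_conjClass_card_occ312 :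
    ∑ π ∈ conjClass n lam, (#(occ312 π) : ℚ) = ∑ π ∈ conjClass n lam, (#(occ231 π) : ℚ) := by
  simp only [← card_occ231_inv]
  exact sum_conjClass_inv fun π => (#(occ231 π) : ℚ)

theorem sum_conjClass_card_occ231 :
    ∑ π ∈ conjClass n lam, (#(occ231 π) : ℚ) =
      ∑ π ∈ conjClass n lam, (∑ x with Injective x, weight ((P π).submatrix x x)) / 360 := by
  calc ∑ π ∈ conjClass n lam, (#(occ231 π) : ℚ)
      = (∑ π ∈ conjClass n lam, (#(occ231 π) + #(occ312 π) : ℚ)) / 2 := by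
        rw [sum_add_distrib, sum_conjClass_card_occ312, add_self_div_two]
    _ = (∑ π ∈ conjClass n lam,
          (∑ x with Injective x, weight ((P π).submatrix x x)) / 180) / 2 := by
        rw [← sum_conjClass_expect_conj]
        simp only [expect_card_occ_conj]
    _ = ∑ π ∈ conjClass n lam, (∑ x with Injective x, weight ((P π).submatrix x x)) / 360 := by
        rw [sum_div]
        exact sum_congr rfl fun π _ => by ring

end ConjClass

theorem stmt10 (n : ℕ) (hn : 3 ≤ n) (lam : n.Partition)
    (p q r X₁ X₂ X₃ X₄ : ℚ)
    (hp : p = (lam.parts.count 1 : ℚ)) (hq : q = (lam.parts.count 2 : ℚ))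
    (hr : r = (lam.parts.count 3 : ℚ))
    (hX1 : X₁ = p - 1) (hX2 : X₂ = (p - 1) * (p - 2) / 2 + q - 1)
    (hX3 : X₃ = (p - 1) * (p - 2) / 2 - q)
    (hX4 : X₄ = (p - 1) * (p - 2) * (p - 3) / 3 - p - r + 2) :
    ((∑ π ∈ conjClass n lam,
      ((((Finset.univ : Finset (Fin n × Fin n × Fin n)).filter fun x =>
          x.1 < x.2.1 ∧ x.2.1 < x.2.2 ∧ π x.2.2 < π x.1 ∧ π x.1 < π x.2.1).card : ℚ)))
      = ((conjClass n lam).card : ℚ) *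
        ((n.choose 3 : ℚ) / 6 - ((n : ℚ) + 1) * (3 * (n : ℚ) - 4) * X₁ / 120
          - ((n : ℚ) + 1) * X₂ / 60 + ((n : ℚ) + 1) * X₃ / 30 - X₄ / 30)) ∧
    ((∑ π ∈ conjClass n lam,
      ((((Finset.univ : Finset (Fin n × Fin n × Fin n)).filter fun x =>
          x.1 < x.2.1 ∧ x.2.1 < x.2.2 ∧ π x.2.1 < π x.2.2 ∧ π x.2.2 < π x.1).card : ℚ)))
      = ((conjClass n lam).card : ℚ) *
        ((n.choose 3 : ℚ) / 6 - ((n : ℚ) + 1) * (3 * (n : ℚ) - 4) * X₁ / 120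
          - ((n : ℚ) + 1) * X₂ / 60 + ((n : ℚ) + 1) * X₃ / 30 - X₄ / 30)) := by
  have sum_occ231 : ∑ π ∈ conjClass n lam, (#(occ231 π) : ℚ) = #(conjClass n lam) *
      (n.choose 3 / 6 - (n + 1) * (3 * n - 4) * X₁ / 120 - (n + 1) * X₂ / 60
        + (n + 1) * X₃ / 30 - X₄ / 30) := by
    rw [sum_conjClass_card_occ231, ← nsmul_eq_mul, ← sum_const]
    refine sum_congr rfl fun π hπ => ?_
    have parts_eq : π.partition.parts = lam.parts := (mem_filter_univ π).1 hπ
    rw [← parts_eq] at hp hq hr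
    rw [hX1, hX2, hX3, hX4, sum_weight_eq_partition_counts π (Fintype.card_fin n) hp hq hr]
  exact ⟨sum_occ231, sum_conjClass_card_occ312.trans sum_occ231⟩
end
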